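/- Let d ≥ 2 and m ≥ 2, let Π_1, …, Π_m be parallel hyperplanes in E^{d+1} with Π_j above Π_i for j > i, let P_i ⊂ Π_i be finite sets with each 𝒫_i = conv(P_i) d-dimensional, let P = P_1 ∪ … ∪ P_m and 𝒫 = conv(P). Then there exist finite sets P_i' ⊂ Π_i such that, writing P' = P_1' ∪ … ∪ P_m' and 𝒫' = conv(P'): (i) 𝒫' has the same number of vertices as 𝒫; (ii) every nonempty proper exposed face of 𝒫' other than 𝒫' ∩ Π_1 and 𝒫' ∩ Π_m is a simplex; and (iii) f_k(𝒫) ≤ f_k(𝒫') for all 1 ≤ k ≤ d. (Lemma 2.2.) -/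

import Mathlib

/-!
Replace the points by the vertices `v` of their hull `𝒫` and move these slightly, each inside its
own hyperplane (its layer), to a configuration `c` whose only affine dependences are those forced
by the dimensions of the space and of the layers. Such configurations are dense, and convex
independence is an open condition, so no vertex is lost. In such a configuration the points on a
hyperplane not parallel to the layers are affinely independent, while a supporting hyperplane
parallel to the layers cuts out the bottom or the top face; hence all other proper faces are
simplices.

For the face numbers, let `F` be a face of `𝒫` exposed by a functional not constant on the layers,
and choose `x ∈ F` outside every affine span of vertices that does not contain `F`. Push `x`
slightly outwards inside its layer to a point `z`, and let `y` be the point of the new polytope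
nearest to `z`. The hyperplane through `y` orthogonal to `z - y` supports the new polytope and is
not parallel to the layers, so it cuts out a simplex. Since `y` is close to `x`, the point `x` lies
in the hull of the original positions of the vertices of this simplex, hence in the hull of those
of them that belong to `F`; by the choice of `x`, these span `F` affinely. A minimal spanning
subfamily gives a simplex of the dimension of `F` which is a face of the new polytope and remembers
the affine span of `F`, hence `F` itself. Tilting the exposing functional makes this apply to every
proper face other than a facet contained in a layer, and such a facet simply keeps its vertices.
-/

open Set Pointwise RealInnerProductSpace

/-- The dimension of the affine hull of a set. -/
noncomputable def adim {N : ℕ} (F : Set (EuclideanSpace ℝ (Fin N))) : ℕ :=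
  Module.finrank ℝ (vectorSpan ℝ F)

/-- The number of `k`-dimensional nonempty exposed faces of `C`. -/
noncomputable def fCount {N : ℕ} (C : Set (EuclideanSpace ℝ (Fin N))) (k : ℕ) : ℕ :=
  {F : Set (EuclideanSpace ℝ (Fin N)) |
    IsExposed ℝ C F ∧ F.Nonempty ∧ adim F = k}.ncard

/-- A compact convex set is a simplex if its extreme points (vertices) are affinely
independent. -/
def IsSimplexSet {N : ℕ} (F : Set (EuclideanSpace ℝ (Fin N))) : Prop :=
  AffineIndependent ℝ ((↑) : (F.extremePoints ℝ) → EuclideanSpace ℝ (Fin N))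

open Filter Topology Module

/-! ### Exposed faces of polytopes -/

section Exposed

variable {E : Type*} [NormedAddCommGroup E] [NormedSpace ℝ E] {ι : Type*}

theorem apply_le_of_mem_convexHull {l : StrongDual ℝ E} {s : Set E} {α : ℝ} (h : ∀ y ∈ s, l y ≤ α)
    {x : E} (hx : x ∈ convexHull ℝ s) : l x ≤ α :=
  convexHull_min h (convex_halfSpace_le l.toLinearMap.isLinear α) hx

theorem apply_eq_of_mem_convexHull {l : StrongDual ℝ E} {s : Set E} {α : ℝ} (h : ∀ y ∈ s, l y = α)
    {x : E} (hx : x ∈ convexHull ℝ s) : l x = α :=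
  convexHull_min h (convex_hyperplane l.toLinearMap.isLinear α) hx

theorem convexHull_extremePoints_of_finite {s : Set E} (hs : s.Finite) :
    convexHull ℝ ((convexHull ℝ s).extremePoints ℝ) = convexHull ℝ s := by
  have hclosed := (hs.subset (extremePoints_convexHull_subset (𝕜 := ℝ))).isClosed_convexHull ℝ
  rw [← hclosed.closure_eq,
    closure_convexHull_extremePoints (hs.isCompact_convexHull ℝ) (convex_convexHull ℝ s)]

theorem convexHull_inter_eq_of_isExposed {s F : Set E} (hs : s.Finite)
    (hF : IsExposed ℝ (convexHull ℝ s) F) : convexHull ℝ (F ∩ s) = F := by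
  have hext : F.extremePoints ℝ ⊆ F ∩ s := fun x hx =>
    ⟨hx.1, extremePoints_convexHull_subset
      (hF.isExtreme.extremePoints_subset_extremePoints hx)⟩
  refine Subset.antisymm (convexHull_min inter_subset_left (hF.convex (convex_convexHull ℝ s))) ?_
  calc F = closure (convexHull ℝ (F.extremePoints ℝ)) :=
        (closure_convexHull_extremePoints (hF.isCompact (hs.isCompact_convexHull ℝ))
          (hF.convex (convex_convexHull ℝ s))).symm
    _ ⊆ closure (convexHull ℝ (F ∩ s)) := closure_mono (convexHull_mono hext)
    _ = convexHull ℝ (F ∩ s) := ((hs.inter_of_right F).isClosed_convexHull ℝ).closure_eq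

theorem finite_setOf_isExposed_convexHull {s : Set E} (hs : s.Finite) :
    {F | IsExposed ℝ (convexHull ℝ s) F}.Finite :=
  (hs.finite_subsets.image (convexHull ℝ)).subset fun F hF =>
    ⟨F ∩ s, inter_subset_right, convexHull_inter_eq_of_isExposed hs hF⟩

theorem mem_convexHull_image_sep [Finite ι] {l : StrongDual ℝ E} {v : ι → E} {T : Set ι} {α : ℝ}
    (h : ∀ j ∈ T, l (v j) ≤ α) {x : E} (hx : x ∈ convexHull ℝ (v '' T)) (hxα : l x = α) :
    x ∈ convexHull ℝ (v '' {j ∈ T | l (v j) = α}) := by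
  have hxF : x ∈ l.toExposed (convexHull ℝ (v '' T)) :=
    ⟨hx, fun y hy => hxα ▸ apply_le_of_mem_convexHull (forall_mem_image.2 h) hy⟩
  rw [← convexHull_inter_eq_of_isExposed (toFinite _)
    ContinuousLinearMap.toExposed.isExposed] at hxF
  refine convexHull_mono ?_ hxF
  rintro _ ⟨⟨-, hmax⟩, j, hj, rfl⟩
  exact ⟨j, ⟨hj, (h j hj).antisymm (hxα ▸ hmax x hx)⟩, rfl⟩

theorem toExposed_convexHull_range [Finite ι] {l : StrongDual ℝ E} {v : ι → E} {α : ℝ}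
    (h : ∀ j, l (v j) ≤ α) (hα : ∃ j, l (v j) = α) :
    l.toExposed (convexHull ℝ (range v)) = convexHull ℝ (v '' {j | l (v j) = α}) := by
  obtain ⟨i, hi⟩ := hα
  refine Subset.antisymm (fun x hx => ?_) fun x hx => ?_
  · have hxα : l x = α := (apply_le_of_mem_convexHull (forall_mem_range.2 h) hx.1).antisymm
      (hi ▸ hx.2 _ (subset_convexHull ℝ _ (mem_range_self i)))
    rw [← image_univ] at hx
    simpa only [mem_univ, true_and] using mem_convexHull_image_sep (fun j _ => h j) hx.1 hxα
  · refine ⟨convexHull_mono (image_subset_range _ _) hx, fun y hy => ?_⟩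
    rw [apply_eq_of_mem_convexHull (forall_mem_image.2 fun j hj => hj) hx]
    exact apply_le_of_mem_convexHull (forall_mem_range.2 h) hy

theorem isExposed_convexHull_image_setOf_eq [Finite ι] {l : StrongDual ℝ E} {v : ι → E} {α : ℝ}
    (h : ∀ j, l (v j) ≤ α) :
    IsExposed ℝ (convexHull ℝ (range v)) (convexHull ℝ (v '' {j | l (v j) = α})) := by
  intro hne
  rw [convexHull_nonempty_iff, image_nonempty] at hne
  exact ⟨l, (toExposed_convexHull_range h hne).symm⟩

theorem exists_eq_convexHull_image_of_isExposed [Finite ι] {v : ι → E} {F : Set E}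
    (hF : IsExposed ℝ (convexHull ℝ (range v)) F) (hne : F.Nonempty) :
    ∃ (l : StrongDual ℝ E) (α : ℝ), (∀ j, l (v j) ≤ α) ∧ (∃ j, l (v j) = α) ∧
      F = convexHull ℝ (v '' {j | l (v j) = α}) := by
  have hhull := convexHull_inter_eq_of_isExposed (finite_range v) hF
  obtain ⟨_, hjF, j, rfl⟩ : (F ∩ range v).Nonempty := by
    rwa [← convexHull_nonempty_iff (𝕜 := ℝ), hhull]
  obtain ⟨l, rfl⟩ := hF hne
  have hle : ∀ i, l (v i) ≤ l (v j) := fun i => hjF.2 _ (subset_convexHull ℝ _ (mem_range_self i))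
  exact ⟨l, l (v j), hle, ⟨j, rfl⟩, toExposed_convexHull_range hle ⟨j, rfl⟩⟩

theorem inter_affineSpan_eq_of_isExposed {A F : Set E} (hF : IsExposed ℝ A F) :
    A ∩ affineSpan ℝ F = F := by
  refine Subset.antisymm ?_ (subset_inter hF.subset (subset_affineSpan ℝ F))
  rintro x ⟨hxA, hx⟩
  obtain ⟨w, hw⟩ := affineSpan_nonempty (k := ℝ).1 ⟨x, hx⟩
  obtain ⟨l, rfl⟩ := hF ⟨w, hw⟩
  have hconst : EqOn l.toLinearMap.toAffineMap (AffineMap.const ℝ E (l w)) (l.toExposed A) :=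
    fun y hy => (hw.2 y hy.1).antisymm (hy.2 w hw.1)
  have hlx : l x = l w := AffineMap.eqOn_affineSpan hconst hx
  exact ⟨hxA, fun y hy => hlx ▸ hw.2 y hy⟩

end Exposed

/-! ### Generic points and tilted functionals -/

section Generic

variable {E : Type*} [NormedAddCommGroup E] [NormedSpace ℝ E] {ι : Type*}

theorem subsingleton_setOf_lineMap_mem {A : AffineSubspace ℝ E} {x y : E} (h : x ∉ A ∨ y ∉ A) :
    {r : ℝ | AffineMap.lineMap x y r ∈ A}.Subsingleton := by
  intro r hr r' hr'
  by_contra hne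
  have hline (q : ℝ) : AffineMap.lineMap x y q ∈ A := by
    have hq : AffineMap.lineMap r r' ((q - r) / (r' - r)) = q := by
      rw [AffineMap.lineMap_apply_ring', div_mul_cancel₀ _ (sub_ne_zero.2 (Ne.symm hne)),
        sub_add_cancel]
    rw [← hq, AffineMap.apply_lineMap]
    exact AffineMap.lineMap_mem _ hr hr'
  exact h.elim (fun hx => hx (by simpa using hline 0)) fun hy => hy (by simpa using hline 1)

theorem exists_mem_forall_notMem_of_convex {F : Set E} (hF : Convex ℝ F) (hne : F.Nonempty)
    {𝒜 : Set (AffineSubspace ℝ E)} (h𝒜 : 𝒜.Finite) (h : ∀ A ∈ 𝒜, ¬ F ⊆ A) :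
    ∃ x ∈ F, ∀ A ∈ 𝒜, x ∉ A := by
  induction 𝒜, h𝒜 using Set.Finite.induction_on with
  | empty => exact ⟨_, hne.some_mem, by simp⟩
  | @insert B 𝒜 _ h𝒜 ih =>
    obtain ⟨x, hxF, hx⟩ := ih fun A hA => h A (mem_insert_of_mem B hA)
    obtain ⟨y, hyF, hy⟩ := not_subset.1 (h B (mem_insert B 𝒜))
    have hfin : (⋃ A ∈ insert B 𝒜, {r : ℝ | AffineMap.lineMap x y r ∈ A}).Finite :=
      (h𝒜.insert B).biUnion fun A hA => Subsingleton.finite <| subsingleton_setOf_lineMap_mem <|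
        hA.elim (fun hAB => .inr (hAB ▸ hy)) fun hA => .inl (hx A hA)
    obtain ⟨r, hr, hr'⟩ := (Icc_infinite (zero_lt_one' ℝ)).exists_notMem_finite hfin
    exact ⟨AffineMap.lineMap x y r, hF.lineMap_mem hxF hyF hr,
      fun A hA hmem => hr' (mem_biUnion hA hmem)⟩

theorem eventually_add_mul_le_and_eq_iff [Finite ι] {a b : ι → ℝ} {α β : ℝ} (ha : ∀ j, a j ≤ α)
    (hb : ∀ j, a j = α → b j ≤ β) :
    ∀ᶠ ε in 𝓝[>] (0 : ℝ), ∀ j, a j + ε * b j ≤ α + ε * β ∧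
      (a j + ε * b j = α + ε * β ↔ a j = α ∧ b j = β) := by
  refine eventually_all.2 fun j => ?_
  rcases (ha j).eq_or_lt with heq | hlt
  · filter_upwards [self_mem_nhdsWithin] with ε (hε : 0 < ε)
    simp only [heq, add_le_add_iff_left, add_right_inj, true_and,
      mul_le_mul_iff_right₀ hε, hb j heq, mul_right_inj' hε.ne']
  · have hcont : Continuous fun ε : ℝ => α + ε * β - (a j + ε * b j) := by fun_prop
    have hpos : ∀ᶠ ε in 𝓝 (0 : ℝ), 0 < α + ε * β - (a j + ε * b j) :=
      hcont.continuousAt.eventually (lt_mem_nhds (by simpa using hlt))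
    filter_upwards [nhdsWithin_le_nhds hpos] with ε hε
    rw [sub_pos] at hε
    exact ⟨hε.le, iff_of_false hε.ne fun h => hlt.ne h.1⟩

theorem exists_strongDual_apply_eq_add [FiniteDimensional ℝ E] {p : ι → E}
    (hp : AffineIndependent ℝ p) (g : ι → ℝ) :
    ∃ (r : StrongDual ℝ E) (γ : ℝ), ∀ j, r (p j) = g j + γ := by
  rcases isEmpty_or_nonempty ι with _ | ⟨⟨i⟩⟩
  · exact ⟨0, 0, isEmptyElim⟩
  have hli := (affineIndependent_iff_linearIndependent_vsub ℝ p i).1 hp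
  obtain ⟨r, hr⟩ := ((Basis.span hli).constr ℝ fun j => g j - g i).exists_extend
  refine ⟨r.toContinuousLinearMap, r (p i) - g i, fun j => ?_⟩
  suffices h : r (p j - p i) = g j - g i by
    rw [map_sub] at h
    rw [LinearMap.coe_toContinuousLinearMap']
    linarith
  rcases eq_or_ne j i with rfl | hj
  · simp
  · have h := LinearMap.congr_fun hr (Basis.span hli ⟨j, hj⟩)
    rw [Basis.constr_basis] at h
    simpa [Basis.span_apply] using h

theorem isExposed_convexHull_image_of_subset [FiniteDimensional ℝ E] [Finite ι] {p : ι → E}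
    {l : StrongDual ℝ E} {β : ℝ} (hle : ∀ j, l (p j) ≤ β)
    (hind : AffineIndependent ℝ fun j : {j | l (p j) = β} => p j) {S : Set ι}
    (hS : S ⊆ {j | l (p j) = β}) :
    IsExposed ℝ (convexHull ℝ (range p)) (convexHull ℝ (p '' S)) := by
  classical
  obtain ⟨r, γ, hr⟩ := exists_strongDual_apply_eq_add hind fun j => if j.1 ∈ S then 0 else -1
  have hrS (j : ι) (hj : l (p j) = β) : r (p j) ≤ γ ∧ (r (p j) = γ ↔ j ∈ S) := by
    have := hr ⟨j, hj⟩
    by_cases hjS : j ∈ S <;> simp [this, hjS]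
  obtain ⟨ε, hε⟩ := (eventually_add_mul_le_and_eq_iff hle fun j hj => (hrS j hj).1).exists
  have hSeq : S = {j | (l + ε • r) (p j) = β + ε * γ} := by
    ext j
    exact ⟨fun hj => (hε j).2.2 ⟨hS hj, (hrS j (hS hj)).2.2 hj⟩, fun hj =>
      have h := (hε j).2.1 hj
      (hrS j h.1).2.1 h.2⟩
  rw [hSeq]
  exact isExposed_convexHull_image_setOf_eq fun j => (hε j).1

end Generic

/-! ### Configurations in layered general position -/

section GeneralPosition

variable {E : Type*} [NormedAddCommGroup E] [NormedSpace ℝ E] {ι : Type*}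

theorem vectorSpan_le_ker {l : StrongDual ℝ E} {s : Set E} {α : ℝ} (h : ∀ x ∈ s, l x = α) :
    vectorSpan ℝ s ≤ l.ker := by
  rw [vectorSpan_def, Submodule.span_le]
  rintro _ ⟨x, hx, y, hy, rfl⟩
  simp [h x hx, h y hy]

theorem apply_eq_of_vectorSpan_le_ker {l : StrongDual ℝ E} {s : Set E}
    (h : vectorSpan ℝ s ≤ l.ker) {x y : E} (hx : x ∈ s) (hy : y ∈ s) : l x = l y :=
  sub_eq_zero.1 ((map_sub l x y).symm.trans (h (vsub_mem_vectorSpan ℝ hx hy)))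

theorem vectorSpan_convexHull (s : Set E) : vectorSpan ℝ (convexHull ℝ s) = vectorSpan ℝ s := by
  rw [← direction_affineSpan, affineSpan_convexHull, direction_affineSpan]

theorem finrank_ker_add_one [FiniteDimensional ℝ E] {l : StrongDual ℝ E} (hl : l ≠ 0) :
    finrank ℝ l.ker + 1 = finrank ℝ E :=
  Dual.finrank_ker_add_one_of_ne_zero (f := l.toLinearMap) fun h =>
    hl (ContinuousLinearMap.coe_injective h)

theorem mem_span_singleton_of_ker_le_ker {l h : StrongDual ℝ E} (hle : l.ker ≤ h.ker) :
    h ∈ ℝ ∙ l := by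
  obtain ⟨s, hs⟩ := Submodule.mem_span_singleton.1 <| by
    simpa only [range_const] using mem_span_of_iInf_ker_le_ker (ι := Unit)
      (L := fun _ => l.toLinearMap) (K := h.toLinearMap) (by simpa using hle)
  exact Submodule.mem_span_singleton.2 ⟨s, ContinuousLinearMap.coe_injective hs⟩

theorem ker_le_direction_of_inter_subset {l : StrongDual ℝ E} {A : AffineSubspace ℝ E} {x : E}
    {U : Set E} (hU : U ∈ 𝓝 x) (h : U ∩ {y | l y = l x} ⊆ A) : l.ker ≤ A.direction := by
  intro w hw
  have hw : l w = 0 := hw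
  have hcont : ContinuousAt (fun ε : ℝ => ε • w + x) 0 := by fun_prop
  have hev : ∀ᶠ ε in 𝓝[≠] (0 : ℝ), ε • w + x ∈ U :=
    nhdsWithin_le_nhds (hcont.eventually_mem (by simpa using hU))
  obtain ⟨ε, hεU, hε⟩ := (hev.and self_mem_nhdsWithin).exists
  have hmem : ε • w + x ∈ A := h ⟨hεU, by simp [hw]⟩
  have hdir := AffineSubspace.vsub_mem_direction hmem (h ⟨mem_of_mem_nhds hU, rfl⟩)
  rw [vsub_eq_sub, add_sub_cancel_right] at hdir
  exact (Submodule.smul_mem_iff _ hε).1 hdir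

theorem finrank_vectorSpan_image_add_one [Finite ι] {c : ι → E} {T : Set ι}
    (hT : AffineIndependent ℝ fun j : T => c j) (hne : T.Nonempty) :
    finrank ℝ (vectorSpan ℝ (c '' T)) + 1 = T.ncard := by
  have := Fintype.ofFinite T
  have := hne.to_subtype
  rw [image_eq_range, hT.finrank_vectorSpan_add_one, ← Nat.card_eq_fintype_card,
    Nat.card_coe_set_eq]

theorem finrank_vectorSpan_image_eq_of_affineIndependent [Finite ι] {v c : ι → E} {S : Set ι}
    (hv : AffineIndependent ℝ fun j : S => v j) (hc : AffineIndependent ℝ fun j : S => c j) :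
    finrank ℝ (vectorSpan ℝ (v '' S)) = finrank ℝ (vectorSpan ℝ (c '' S)) := by
  rcases S.eq_empty_or_nonempty with rfl | hne
  · rw [image_empty, image_empty]
  · have := finrank_vectorSpan_image_add_one hv hne
    have := finrank_vectorSpan_image_add_one hc hne
    omega

theorem affineIndependent_of_subset {c : ι → E} {S T : Set ι} (hST : S ⊆ T)
    (hT : AffineIndependent ℝ fun j : T => c j) : AffineIndependent ℝ fun j : S => c j :=
  hT.comp_embedding (embeddingOfSubset S T hST)

theorem affineIndependent_insert {c : ι → E} {T : Set ι} {i : ι}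
    (hT : AffineIndependent ℝ fun j : T => c j) (hi : c i ∉ affineSpan ℝ (c '' T)) :
    AffineIndependent ℝ fun j : (insert i T : Set ι) => c j := by
  let i' : (insert i T : Set ι) := ⟨i, mem_insert i T⟩
  have hmem (x : (insert i T : Set ι)) (hx : x ≠ i') : x.1 ∈ T :=
    x.2.resolve_left fun h => hx (Subtype.ext h)
  refine AffineIndependent.affineIndependent_of_notMem_span (i := i') ?_ fun h => hi ?_
  · exact hT.comp_embedding ⟨fun x : {y // y ≠ i'} => ⟨x.1.1, hmem x.1 x.2⟩, fun x y h =>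
      Subtype.ext (Subtype.ext (Subtype.mk.inj h))⟩
  · refine affineSpan_mono ℝ ?_ h
    rintro _ ⟨x, hx, rfl⟩
    exact mem_image_of_mem c (hmem x hx)

/-- Index sets whose points are affinely independent for a generic choice of points of heights `τ`
in a space of dimension `n`: at most `n` points, or `n + 1` points that do not all lie in one
layer (a layer has dimension `n - 1`, so `n + 1` points of it are always dependent). -/
def IsUnobstructed (n : ℕ) (τ : ι → ℝ) (T : Set ι) : Prop :=
  T.ncard ≤ n ∨ T.ncard ≤ n + 1 ∧ (τ '' T).Nontrivial

/-- The points `c j` with `j ∈ A` have only those affine dependences that their heights `ℓ (c j)`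
and the dimension of the space force upon them. -/
def InLayeredGeneralPositionOn (ℓ : StrongDual ℝ E) (c : ι → E) (A : Set ι) : Prop :=
  ∀ T ⊆ A, IsUnobstructed (finrank ℝ E) (ℓ ∘ c) T → AffineIndependent ℝ fun j : T => c j

theorem IsUnobstructed.of_insert [Finite ι] {n : ℕ} {τ : ι → ℝ} {T : Set ι} {i : ι} (hi : i ∉ T)
    (h : IsUnobstructed n τ (insert i T)) : IsUnobstructed n τ T := by
  have hcard := ncard_insert_of_notMem hi (toFinite T)
  rcases h with h | ⟨h, -⟩ <;> exact .inl (by omega)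

theorem not_ker_le_vectorSpan_of_isUnobstructed [FiniteDimensional ℝ E] [Finite ι]
    {ℓ : StrongDual ℝ E} (hℓ : ℓ ≠ 0) {c : ι → E} {T : Set ι} {i : ι} (hi : i ∉ T)
    (hins : IsUnobstructed (finrank ℝ E) (ℓ ∘ c) (insert i T))
    (hT : AffineIndependent ℝ fun j : T => c j) (hmem : c i ∈ affineSpan ℝ (c '' T)) :
    ¬ ℓ.ker ≤ vectorSpan ℝ (c '' T) := by
  intro hle
  have hcard := ncard_insert_of_notMem hi (toFinite T)
  have hTcard := finrank_vectorSpan_image_add_one hT (image_nonempty.1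
    (affineSpan_nonempty ℝ |>.1 ⟨_, hmem⟩))
  have hker := finrank_ker_add_one hℓ
  have hmono := Submodule.finrank_mono hle
  rcases hins with hins | ⟨hins, hnontriv⟩
  · omega
  · have hker_eq : ℓ.ker = vectorSpan ℝ (c '' T) := Submodule.eq_of_le_of_finrank_le hle (by omega)
    refine not_nontrivial_iff.2 ?_ hnontriv
    suffices h : ∀ j ∈ insert i T, ℓ (c j) = ℓ (c i) by
      rintro _ ⟨j, hj, rfl⟩ _ ⟨k, hk, rfl⟩
      exact (h j hj).trans (h k hk).symm
    rintro j (rfl | hj)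
    · rfl
    · have hdir : c j - c i ∈ ℓ.ker := by
        rw [hker_eq, ← direction_affineSpan]
        exact AffineSubspace.vsub_mem_direction (subset_affineSpan ℝ _ ⟨j, hj, rfl⟩) hmem
      exact sub_eq_zero.1 ((map_sub ℓ _ _).symm.trans hdir)

theorem exists_mem_inter_forall_notMem_affineSpan [FiniteDimensional ℝ E] [Finite ι]
    {ℓ : StrongDual ℝ E} (hℓ : ℓ ≠ 0) {c : ι → E} {A : Set ι} {i : ι} (hi : i ∉ A)
    (hA : InLayeredGeneralPositionOn ℓ c A) {U : Set E} (hU : U ∈ 𝓝 (c i)) (hconv : Convex ℝ U) :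
    ∃ q ∈ U, ℓ q = ℓ (c i) ∧ ∀ T ⊆ A, IsUnobstructed (finrank ℝ E) (ℓ ∘ c) (insert i T) →
      q ∉ affineSpan ℝ (c '' T) := by
  let 𝒯 : Set (Set ι) := {T | T ⊆ A ∧ IsUnobstructed (finrank ℝ E) (ℓ ∘ c) (insert i T)}
  have h𝒯 : ∀ T ∈ 𝒯, ¬ U ∩ {y | ℓ y = ℓ (c i)} ⊆ affineSpan ℝ (c '' T) := by
    rintro T ⟨hTA, hT⟩ hsub
    have hiT : i ∉ T := fun h => hi (hTA h)
    refine not_ker_le_vectorSpan_of_isUnobstructed hℓ hiT hT (hA T hTA (hT.of_insert hiT))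
      (hsub ⟨mem_of_mem_nhds hU, rfl⟩) ?_
    rw [← direction_affineSpan]
    exact ker_le_direction_of_inter_subset hU hsub
  obtain ⟨q, ⟨hqU, hq⟩, hq𝒯⟩ := exists_mem_forall_notMem_of_convex
    (hconv.inter (convex_hyperplane ℓ.toLinearMap.isLinear (ℓ (c i))))
    ⟨c i, mem_of_mem_nhds hU, rfl⟩
    ((toFinite 𝒯).image fun T => affineSpan ℝ (c '' T)) (forall_mem_image.2 h𝒯)
  exact ⟨q, hqU, hq, fun T hTA hT => hq𝒯 _ (mem_image_of_mem _ ⟨hTA, hT⟩)⟩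

theorem InLayeredGeneralPositionOn.update_insert [DecidableEq ι] [Finite ι] {ℓ : StrongDual ℝ E}
    {c : ι → E} {A : Set ι} (hA : InLayeredGeneralPositionOn ℓ c A) {i : ι} (hi : i ∉ A) {q : E}
    (hq : ℓ q = ℓ (c i))
    (hqA : ∀ T ⊆ A, IsUnobstructed (finrank ℝ E) (ℓ ∘ c) (insert i T) → q ∉ affineSpan ℝ (c '' T)) :
    InLayeredGeneralPositionOn ℓ (Function.update c i q) (insert i A) := by
  intro T hTA hT
  rw [Function.comp_update, hq, show Function.update (ℓ ∘ c) i (ℓ (c i)) = ℓ ∘ c from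
    Function.update_eq_self i (ℓ ∘ c)] at hT
  have heqOn {S : Set ι} (hS : i ∉ S) : EqOn (Function.update c i q) c S := fun j hj =>
    Function.update_of_ne (ne_of_mem_of_not_mem hj hS) q c
  have hind {S : Set ι} (hSA : S ⊆ A) (hS : IsUnobstructed (finrank ℝ E) (ℓ ∘ c) S) :
      AffineIndependent ℝ fun j : S => Function.update c i q j := by
    convert hA S hSA hS using 2 with j
    exact heqOn (fun h => hi (hSA h)) j.2
  by_cases hiT : i ∈ T
  · obtain ⟨S, hiS, rfl⟩ : ∃ S, i ∉ S ∧ insert i S = T :=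
      ⟨T \ {i}, notMem_sdiff_of_mem (mem_singleton i), insert_sdiff_self_of_mem hiT⟩
    have hSA : S ⊆ A := (subset_insert_iff_of_notMem hiS).1 ((subset_insert i S).trans hTA)
    refine affineIndependent_insert (hind hSA (hT.of_insert hiS)) ?_
    rw [Function.update_self, (heqOn hiS).image_eq]
    exact hqA S hSA hT
  · exact hind ((subset_insert_iff_of_notMem hiT).1 hTA) hT

theorem exists_dist_lt_inLayeredGeneralPositionOn [FiniteDimensional ℝ E] [Finite ι]
    {ℓ : StrongDual ℝ E} (hℓ : ℓ ≠ 0) (v : ι → E) {δ : ℝ} (hδ : 0 < δ) (A : Set ι) :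
    ∃ c : ι → E, (∀ j, dist (c j) (v j) < δ) ∧ ℓ ∘ c = ℓ ∘ v ∧
      InLayeredGeneralPositionOn ℓ c A := by
  classical
  induction A, toFinite A using Set.Finite.induction_on with
  | empty =>
    refine ⟨v, fun j => by simpa using hδ, rfl, fun T hT _ => ?_⟩
    rw [subset_empty_iff.1 hT]
    exact affineIndependent_of_subsingleton ℝ _
  | @insert i A hi _ ih =>
    obtain ⟨c, hdist, hheight, hA⟩ := ih
    obtain ⟨q, hqδ, hq, hqA⟩ := exists_mem_inter_forall_notMem_affineSpan hℓ hi hA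
      (Metric.isOpen_ball.mem_nhds (hdist i)) (convex_ball (v i) δ)
    refine ⟨Function.update c i q, fun j => ?_, ?_, hA.update_insert hi hq hqA⟩
    · rcases eq_or_ne j i with rfl | hj
      · simpa using hqδ
      · simpa [hj] using hdist j
    · rw [Function.comp_update, hq, ← hheight]
      exact Function.update_eq_self i (ℓ ∘ c)

theorem frequently_inLayeredGeneralPositionOn_univ [FiniteDimensional ℝ E] [Finite ι]
    {ℓ : StrongDual ℝ E} (hℓ : ℓ ≠ 0) (v : ι → E) :
    ∃ᶠ c in 𝓝 v, ℓ ∘ c = ℓ ∘ v ∧ InLayeredGeneralPositionOn ℓ c univ := by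
  cases nonempty_fintype ι
  refine Metric.nhds_basis_ball.frequently_iff.2 fun δ hδ => ?_
  obtain ⟨c, hdist, hc⟩ := exists_dist_lt_inLayeredGeneralPositionOn hℓ v hδ univ
  exact ⟨c, (dist_pi_lt_iff hδ).2 hdist, hc⟩

theorem InLayeredGeneralPositionOn.affineIndependent_setOf_eq [FiniteDimensional ℝ E] [Finite ι]
    {ℓ : StrongDual ℝ E} (hℓ : ℓ ≠ 0) {c : ι → E} (hc : InLayeredGeneralPositionOn ℓ c univ)
    {h : StrongDual ℝ E} (hh : h ∉ ℝ ∙ ℓ) (β : ℝ) :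
    AffineIndependent ℝ fun j : {j | h (c j) = β} => c j := by
  set T := {j | h (c j) = β}
  have hh0 : h ≠ 0 := fun h0 => hh (h0 ▸ zero_mem _)
  have hkerℓ := finrank_ker_add_one hℓ
  have hkerh := finrank_ker_add_one hh0
  have hspan {S : Set ι} (hS : S ⊆ T) : vectorSpan ℝ (c '' S) ≤ h.ker :=
    vectorSpan_le_ker (forall_mem_image.2 hS)
  refine hc T (subset_univ T) (.inl ?_)
  by_contra! hcard
  by_cases hτ : ((ℓ ∘ c) '' T).Nontrivial
  · -- `finrank ℝ E + 1` points not all in one layer would span a space larger than `h.ker`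
    obtain ⟨_, ⟨i, hi, rfl⟩, _, ⟨k, hk, rfl⟩, hik⟩ := hτ
    have hpair : ({i, k} : Set ι).ncard ≤ finrank ℝ E + 1 := by
      have := ncard_insert_le i {k}
      rw [ncard_singleton] at this
      omega
    obtain ⟨S, hikS, hST, hS⟩ := exists_subsuperset_card_eq (pair_subset hi hk) hpair hcard
    have hunobs : IsUnobstructed (finrank ℝ E) (ℓ ∘ c) S :=
      .inr ⟨hS.le, ⟨_, ⟨i, hikS (by simp), rfl⟩, _, ⟨k, hikS (by simp), rfl⟩, hik⟩⟩
    have hrank := finrank_vectorSpan_image_add_one (hc S (subset_univ S) hunobs) ⟨i, hikS (by simp)⟩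
    have := Submodule.finrank_mono (hspan hST)
    omega
  · -- `finrank ℝ E` points of one layer span the direction of the layer, which is then `h.ker`
    obtain ⟨S, hST, hS⟩ := exists_subset_card_eq hcard.le
    have hSne : S.Nonempty := nonempty_of_ncard_ne_zero (by omega)
    have hrank := finrank_vectorSpan_image_add_one (hc S (subset_univ S) (.inl hS.le)) hSne
    obtain ⟨i, hi⟩ := hSne
    have hle : vectorSpan ℝ (c '' S) ≤ ℓ.ker := vectorSpan_le_ker (α := ℓ (c i)) <|
      forall_mem_image.2 fun j hj => not_nontrivial_iff.1 hτ ⟨j, hST hj, rfl⟩ ⟨i, hST hi, rfl⟩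
    have hSpan : vectorSpan ℝ (c '' S) = ℓ.ker :=
      Submodule.eq_of_le_of_finrank_le hle (by omega)
    exact hh (mem_span_singleton_of_ker_le_ker (hSpan ▸ hspan hST))

end GeneralPosition

/-! ### Stability of faces under perturbation -/

section Stability

variable {E : Type*} [NormedAddCommGroup E] [NormedSpace ℝ E] {ι : Type*}

theorem convexHull_image_subset_thickening {v c : ι → E} {T : Set ι} {δ : ℝ}
    (h : ∀ j ∈ T, dist (v j) (c j) < δ) :
    convexHull ℝ (v '' T) ⊆ Metric.thickening δ (convexHull ℝ (c '' T)) := by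
  refine convexHull_min (forall_mem_image.2 fun j hj => ?_) ((convex_convexHull ℝ _).thickening δ)
  exact Metric.mem_thickening_iff.2 ⟨c j, subset_convexHull ℝ _ (mem_image_of_mem c hj), h j hj⟩

theorem exists_pos_forall_mem_convexHull_image [Finite ι] (v : ι → E) (x : E) :
    ∃ ρ > 0, ∀ (c : ι → E) (y : E), (∀ j, dist (c j) (v j) < ρ) → dist y x < ρ →
      ∀ T, y ∈ convexHull ℝ (c '' T) → x ∈ convexHull ℝ (v '' T) := by
  have h (T : Set ι) : ∀ᶠ ρ in 𝓝[>] (0 : ℝ), x ∉ convexHull ℝ (v '' T) →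
      Disjoint (Metric.ball x ρ) (Metric.thickening ρ (convexHull ℝ (v '' T))) := by
    by_cases hx : x ∈ convexHull ℝ (v '' T)
    · exact .of_forall fun ρ h => (h hx).elim
    obtain ⟨δ, hδ, hdisj⟩ := (disjoint_singleton_left.2 hx).exists_thickenings
      isCompact_singleton ((toFinite (v '' T)).isClosed_convexHull ℝ)
    rw [Metric.thickening_singleton] at hdisj
    filter_upwards [Ioo_mem_nhdsGT hδ] with ρ hρ _ using
      hdisj.mono (Metric.ball_subset_ball hρ.2.le) (Metric.thickening_mono hρ.2.le _)
  obtain ⟨ρ, hρT, hρ⟩ := ((eventually_all.2 h).and self_mem_nhdsWithin).exists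
  refine ⟨ρ, hρ, fun c y hc hy T hyT => by_contra fun hx => ?_⟩
  exact disjoint_left.1 (hρT T hx) hy (convexHull_image_subset_thickening (fun j _ => hc j) hyT)

theorem eventually_forall_dist_lt {X : Type*} [PseudoMetricSpace X] [Finite ι] (v : ι → X) {δ : ℝ}
    (hδ : 0 < δ) : ∀ᶠ c in 𝓝 v, ∀ j, dist (c j) (v j) < δ :=
  eventually_all.2 fun j =>
    (continuous_apply j).continuousAt.eventually_mem (Metric.ball_mem_nhds (v j) hδ)

theorem eventually_convexIndependent [Finite ι] {v : ι → E} (hv : ConvexIndependent ℝ v) :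
    ∀ᶠ c in 𝓝 v, ConvexIndependent ℝ c := by
  have h (j : ι) : ∀ᶠ c in 𝓝 v, ∀ T, c j ∈ convexHull ℝ (c '' T) → j ∈ T := by
    obtain ⟨ρ, hρ, hstab⟩ := exists_pos_forall_mem_convexHull_image v (v j)
    filter_upwards [eventually_forall_dist_lt v hρ] with c hc T hT
    exact hv T j (hstab c (c j) hc (hc j) T hT)
  filter_upwards [eventually_all.2 h] with c hc T j hj using hc j T hj

theorem exists_dist_lt_apply_eq_apply_lt {ℓ n : StrongDual ℝ E} (hn : n ∉ ℝ ∙ ℓ) (x : E) {δ : ℝ}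
    (hδ : 0 < δ) : ∃ z, dist z x < δ ∧ ℓ z = ℓ x ∧ n x < n z := by
  obtain ⟨p, hpℓ, hpn⟩ : ∃ p, ℓ p = 0 ∧ 0 < n p := by
    by_contra! hp
    refine hn (mem_span_singleton_of_ker_le_ker fun p hpℓ => ?_)
    have hpℓ : ℓ p = 0 := hpℓ
    exact (hp p hpℓ).antisymm (by simpa using hp (-p) (by simpa using hpℓ))
  have hcont : ContinuousAt (fun ε : ℝ => x + ε • p) 0 := by fun_prop
  have hnear : ∀ᶠ ε in 𝓝[>] (0 : ℝ), x + ε • p ∈ Metric.ball x δ := nhdsWithin_le_nhds <|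
    hcont.eventually_mem (Metric.isOpen_ball.mem_nhds (by simpa using hδ))
  obtain ⟨ε, hzx, hε⟩ := (hnear.and self_mem_nhdsWithin).exists
  exact ⟨x + ε • p, hzx, by simp [hpℓ], by simpa using mul_pos hε hpn⟩

theorem exists_subset_affineIndependent_affineSpan_image_eq {v : ι → E}
    (hv : Function.Injective v) (T : Set ι) :
    ∃ S ⊆ T, affineSpan ℝ (v '' S) = affineSpan ℝ (v '' T) ∧
      AffineIndependent ℝ fun j : S => v j := by
  obtain ⟨s, hsT, hspan, hs⟩ := exists_affineIndependent ℝ E (v '' T)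
  obtain ⟨S, hST, rfl⟩ := subset_image_iff.1 hsT
  exact ⟨S, hST, hspan, hs.comp_embedding ((Equiv.Set.image v S hv).toEmbedding)⟩

theorem exists_notMem_span_singleton_le_ker [FiniteDimensional ℝ E] {ℓ : StrongDual ℝ E}
    (hℓ : ℓ ≠ 0) {p : Submodule ℝ E} (hp : p ≠ ⊤) (hpℓ : p ≠ ℓ.ker) :
    ∃ r : StrongDual ℝ E, r ∉ ℝ ∙ ℓ ∧ p ≤ r.ker := by
  have hcoatom : IsCoatom ℓ.ker := LinearMap.isCoatom_ker_of_surjective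
    (LinearMap.surjective fun h => hℓ (ContinuousLinearMap.coe_injective h))
  have hnle : ¬ ℓ.ker ≤ p := fun hle => (hcoatom.le_iff.1 hle).elim hp hpℓ
  obtain ⟨w, hwℓ, hwp⟩ := SetLike.not_le_iff_exists.1 hnle
  obtain ⟨f, hfw, hf⟩ := Submodule.exists_le_ker_of_notMem hwp
  refine ⟨f.toContinuousLinearMap, fun hmem => hfw ?_, hf⟩
  obtain ⟨s, hs⟩ := Submodule.mem_span_singleton.1 hmem
  have hw : ℓ w = 0 := hwℓ
  simpa [hw] using (DFunLike.congr_fun hs w).symm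

theorem exists_mem_convexHull_forall_subset_affineSpan [Finite ι] (v : ι → E) {J : Set ι}
    (hJ : J.Nonempty) : ∃ x ∈ convexHull ℝ (v '' J), ∀ T : Set ι, x ∈ affineSpan ℝ (v '' T) →
      v '' J ⊆ affineSpan ℝ (v '' T) := by
  let 𝒯 : Set (Set ι) := {T | ¬ v '' J ⊆ affineSpan ℝ (v '' T)}
  obtain ⟨x, hx, hx𝒯⟩ := exists_mem_forall_notMem_of_convex (convex_convexHull ℝ (v '' J))
    (hJ.image v).convexHull ((toFinite 𝒯).image fun T => affineSpan ℝ (v '' T))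
    (forall_mem_image.2 fun T hT h => hT ((subset_convexHull ℝ _).trans h))
  exact ⟨x, hx, fun T hxT => by_contra fun hT => hx𝒯 _ (mem_image_of_mem _ hT) hxT⟩

theorem exists_notMem_span_singleton_setOf_eq [FiniteDimensional ℝ E] [Finite ι]
    {ℓ n : StrongDual ℝ E} (hℓ : ℓ ≠ 0) {v : ι → E} {α : ℝ} (hle : ∀ j, n (v j) ≤ α)
    (hα : ∃ j, n (v j) = α) (htop : vectorSpan ℝ (v '' {j | n (v j) = α}) ≠ ⊤)
    (hker : vectorSpan ℝ (v '' {j | n (v j) = α}) ≠ ℓ.ker) :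
    ∃ n' : StrongDual ℝ E, n' ∉ ℝ ∙ ℓ ∧ ∃ α', (∀ j, n' (v j) ≤ α') ∧
      {j | n' (v j) = α'} = {j | n (v j) = α} := by
  by_cases hn : n ∈ ℝ ∙ ℓ
  swap
  · exact ⟨n, hn, α, hle, rfl⟩
  obtain ⟨r, hr, hrker⟩ := exists_notMem_span_singleton_le_ker hℓ htop hker
  obtain ⟨i, hi⟩ := hα
  have hr_eq (j : ι) (hj : n (v j) = α) : r (v j) = r (v i) :=
    apply_eq_of_vectorSpan_le_ker hrker (mem_image_of_mem v hj) (mem_image_of_mem v hi)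
  obtain ⟨ε, hεle, hε⟩ :=
    ((eventually_add_mul_le_and_eq_iff hle fun j hj => (hr_eq j hj).le).and
      self_mem_nhdsWithin).exists
  have hε : 0 < ε := hε
  refine ⟨n + ε • r, fun hmem => hr ?_, α + ε * r (v i), fun j => (hεle j).1, ?_⟩
  · rwa [Submodule.add_mem_iff_right _ hn, Submodule.smul_mem_iff _ hε.ne'] at hmem
  · ext j
    exact (hεle j).2.trans (and_iff_left_of_imp (hr_eq j))

/-- The hull of the points of `c` with index in `S` is a face of the polytope spanned by `c` that
has the dimension of `F` and whose vertices, moved back to the configuration `v`, span the affine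
hull of `F`. This is what remains of a face `F` of the polytope spanned by `v` when `v` is perturbed
to `c`; since the affine hull of `F` is recorded, distinct faces have distinct lifts. -/
structure IsFaceLift (v c : ι → E) (F : Set E) (S : Set ι) : Prop where
  affineSpan_eq : affineSpan ℝ (v '' S) = affineSpan ℝ F
  finrank_eq : finrank ℝ (vectorSpan ℝ (c '' S)) = finrank ℝ (vectorSpan ℝ F)
  isExposed : IsExposed ℝ (convexHull ℝ (range c)) (convexHull ℝ (c '' S))

theorem isFaceLift_of_vectorSpan_eq_ker [FiniteDimensional ℝ E] [Finite ι]
    {ℓ n : StrongDual ℝ E} (hℓ : ℓ ≠ 0) {v c : ι → E} (hv : Function.Injective v) {α : ℝ}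
    (hle : ∀ j, n (v j) ≤ α) (hα : ∃ j, n (v j) = α)
    (hker : vectorSpan ℝ (v '' {j | n (v j) = α}) = ℓ.ker) (hℓc : ℓ ∘ c = ℓ ∘ v)
    (hc : InLayeredGeneralPositionOn ℓ c univ) :
    IsFaceLift v c (convexHull ℝ (v '' {j | n (v j) = α})) {j | n (v j) = α} := by
  set J := {j | n (v j) = α}
  obtain ⟨s, rfl⟩ := Submodule.mem_span_singleton.1 <| mem_span_singleton_of_ker_le_ker <|
    hker.symm.trans_le (vectorSpan_le_ker (forall_mem_image.2 fun _ hj => hj))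
  have hsc (j : ι) : (s • ℓ) (c j) = (s • ℓ) (v j) := congrArg (s * ·) (congrFun hℓc j)
  obtain ⟨S, hSJ, hspan, hvS⟩ := exists_subset_affineIndependent_affineSpan_image_eq hv J
  have hvS_ker : vectorSpan ℝ (v '' S) = ℓ.ker := by
    rw [← direction_affineSpan, hspan, direction_affineSpan, hker]
  have hSne : S.Nonempty := image_nonempty.1 <| (affineSpan_nonempty ℝ).1 <|
    hspan ▸ (affineSpan_nonempty ℝ).2 (Nonempty.image v hα)
  have hcS : AffineIndependent ℝ fun j : S => c j := by
    have := finrank_vectorSpan_image_add_one hvS hSne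
    rw [hvS_ker, finrank_ker_add_one hℓ] at this
    exact hc S (subset_univ S) (.inl this.ge)
  have hcJ_le : vectorSpan ℝ (c '' J) ≤ ℓ.ker := by
    obtain ⟨i, hi⟩ := hα
    refine vectorSpan_le_ker (α := ℓ (v i)) (forall_mem_image.2 fun j hj => ?_)
    exact (congrFun hℓc j).trans <|
      apply_eq_of_vectorSpan_le_ker hker.le (mem_image_of_mem v hj) (mem_image_of_mem v hi)
  have hrank : finrank ℝ (vectorSpan ℝ (c '' J)) = finrank ℝ ℓ.ker := by
    refine (Submodule.finrank_mono hcJ_le).antisymm ?_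
    rw [← hvS_ker, finrank_vectorSpan_image_eq_of_affineIndependent hvS hcS]
    exact Submodule.finrank_mono (vectorSpan_mono ℝ (image_mono hSJ))
  refine ⟨(affineSpan_convexHull _).symm, ?_, ?_⟩
  · rw [hrank, vectorSpan_convexHull, hker]
  · simpa only [hsc] using isExposed_convexHull_image_setOf_eq (v := c) (l := s • ℓ) (α := α)
      fun j => (hsc j).trans_le (hle j)

end Stability

section NearestPoint

variable {E : Type*} [NormedAddCommGroup E] [InnerProductSpace ℝ E] {ι : Type*}

theorem exists_forall_dist_le_and_apply_lt {K : Set E} (hne : K.Nonempty) (hK : IsComplete K)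
    (hconv : Convex ℝ K) {z : E} (hz : z ∉ K) :
    ∃ y ∈ K, (∀ w ∈ K, dist z y ≤ dist z w) ∧
      ∃ h : StrongDual ℝ E, (∀ w ∈ K, h w ≤ h y) ∧ h y < h z := by
  obtain ⟨y, hy, hmin⟩ := exists_norm_eq_iInf_of_complete_convex hne hK hconv z
  have hbdd : BddBelow (range fun w : K => ‖z - w‖) :=
    ⟨0, forall_mem_range.2 fun _ => norm_nonneg _⟩
  refine ⟨y, hy, fun w hw => ?_, innerSL ℝ (z - y), fun w hw => ?_, ?_⟩
  · rw [dist_eq_norm, dist_eq_norm, hmin]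
    exact ciInf_le hbdd ⟨w, hw⟩
  · rw [← sub_nonpos, ← map_sub]
    exact (norm_eq_iInf_iff_real_inner_le_zero hconv hy).1 hmin w hw
  · rw [← sub_pos, ← map_sub]
    exact real_inner_self_pos.2 (sub_ne_zero.2 fun h => hz (h ▸ hy))

theorem eventually_exists_supporting_functional [Finite ι]
    {ℓ n : StrongDual ℝ E} (hn : n ∉ ℝ ∙ ℓ) {v : ι → E} {x : E} (hle : ∀ j, n (v j) ≤ n x)
    (hx : x ∈ convexHull ℝ (range v)) :
    ∀ᶠ c in 𝓝 v, ℓ ∘ c = ℓ ∘ v → ∃ h : StrongDual ℝ E, h ∉ ℝ ∙ ℓ ∧ ∃ β, (∀ j, h (c j) ≤ β) ∧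
      x ∈ convexHull ℝ (v '' {j | h (c j) = β}) := by
  obtain ⟨ρ, hρ, hstab⟩ := exists_pos_forall_mem_convexHull_image v x
  obtain ⟨z, hzx, hℓz, hnz⟩ := exists_dist_lt_apply_eq_apply_lt hn x (by positivity : 0 < ρ / 3)
  have hbelow : ∀ᶠ c in 𝓝 v, ∀ j, n (c j) < n z := eventually_all.2 fun j =>
    (n.continuous.comp (continuous_apply j)).continuousAt.eventually_lt_const ((hle j).trans_lt hnz)
  filter_upwards [hbelow, eventually_forall_dist_lt v (by positivity : 0 < ρ / 3)]
    with c hcz hcv hℓc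
  have hzK : z ∉ convexHull ℝ (range c) := fun hmem => lt_irrefl (n z) <|
    convexHull_min (range_subset_iff.2 hcz) (convex_halfSpace_lt n.toLinearMap.isLinear _) hmem
  obtain ⟨x', hx', hxx'⟩ := Metric.mem_thickening_iff.1 <|
    convexHull_image_subset_thickening (c := c) (fun j _ => dist_comm (c j) (v j) ▸ hcv j)
      (image_univ.symm ▸ hx)
  rw [image_univ] at hx'
  obtain ⟨y, hy, hyz, h, hle_y, hlt⟩ := exists_forall_dist_le_and_apply_lt ⟨x', hx'⟩
    ((finite_range c).isCompact_convexHull ℝ).isComplete (convex_convexHull ℝ _) hzK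
  have hhc (j : ι) : h (c j) ≤ h y := hle_y _ (subset_convexHull ℝ _ (mem_range_self j))
  have hxT : x ∈ convexHull ℝ (v '' {j | h (c j) = h y}) := by
    refine hstab c y (fun j => (hcv j).trans (by linarith)) ?_ _ ?_
    · linarith [dist_triangle_left y x z, hyz x' hx', dist_triangle z x x']
    · simpa using mem_convexHull_image_sep (T := univ) (fun j _ => hhc j) (by simpa using hy) rfl
  refine ⟨h, fun hmem => hlt.ne ?_, h y, hhc, hxT⟩
  obtain ⟨s, rfl⟩ := Submodule.mem_span_singleton.1 hmem
  -- a multiple of `ℓ` takes the same value at `x` and `z`, and on the configurations `v` and `c`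
  have hvc (j : ι) : (s • ℓ) (v j) = (s • ℓ) (c j) := congrArg (s * ·) (congrFun hℓc j).symm
  calc (s • ℓ) y = (s • ℓ) x := (apply_eq_of_mem_convexHull
        (forall_mem_image.2 fun j hj => (hvc j).trans hj) hxT).symm
    _ = (s • ℓ) z := congrArg (s * ·) hℓz.symm

theorem eventually_exists_isFaceLift_of_notMem_span [FiniteDimensional ℝ E] [Finite ι]
    {ℓ n : StrongDual ℝ E} (hℓ : ℓ ≠ 0) (hn : n ∉ ℝ ∙ ℓ) {v : ι → E} (hv : Function.Injective v)
    {α : ℝ} (hle : ∀ j, n (v j) ≤ α) (hα : ∃ j, n (v j) = α) :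
    ∀ᶠ c in 𝓝 v, ℓ ∘ c = ℓ ∘ v → InLayeredGeneralPositionOn ℓ c univ →
      ∃ S, IsFaceLift v c (convexHull ℝ (v '' {j | n (v j) = α})) S := by
  set J := {j | n (v j) = α}
  obtain ⟨x, hxJ, hx⟩ := exists_mem_convexHull_forall_subset_affineSpan v (J := J) hα
  have hnx : n x = α := apply_eq_of_mem_convexHull (forall_mem_image.2 fun _ hj => hj) hxJ
  filter_upwards [eventually_exists_supporting_functional hn (hnx.symm ▸ hle)
    (convexHull_mono (image_subset_range v J) hxJ)] with c hc hℓc hgp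
  obtain ⟨h, hh, β, hβ, hxh⟩ := hc hℓc
  let T := {j | h (c j) = β} ∩ J
  have hxT : x ∈ convexHull ℝ (v '' T) := mem_convexHull_image_sep (fun j _ => hle j) hxh hnx
  have hspanT : affineSpan ℝ (v '' T) = affineSpan ℝ (v '' J) :=
    (affineSpan_mono ℝ (image_mono inter_subset_right)).antisymm <|
      affineSpan_le.2 (hx T (convexHull_subset_affineSpan _ hxT))
  obtain ⟨S, hST, hspanS, hvS⟩ := exists_subset_affineIndependent_affineSpan_image_eq hv T
  have hindep := hgp.affineIndependent_setOf_eq hℓ hh β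
  have hSh : S ⊆ {j | h (c j) = β} := hST.trans inter_subset_left
  refine ⟨S, ?_, ?_, isExposed_convexHull_image_of_subset hβ hindep hSh⟩
  · rw [affineSpan_convexHull, hspanS, hspanT]
  · rw [← finrank_vectorSpan_image_eq_of_affineIndependent hvS
      (affineIndependent_of_subset hSh hindep), ← direction_affineSpan, hspanS, hspanT,
      direction_affineSpan, vectorSpan_convexHull]

theorem eventually_exists_isFaceLift [FiniteDimensional ℝ E] [Finite ι] {ℓ : StrongDual ℝ E}
    (hℓ : ℓ ≠ 0) {v : ι → E} (hv : Function.Injective v) {F : Set E}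
    (hF : IsExposed ℝ (convexHull ℝ (range v)) F) (hne : F.Nonempty)
    (hrank : finrank ℝ (vectorSpan ℝ F) < finrank ℝ E) :
    ∀ᶠ c in 𝓝 v, ℓ ∘ c = ℓ ∘ v → InLayeredGeneralPositionOn ℓ c univ →
      ∃ S, IsFaceLift v c F S := by
  obtain ⟨n, α, hle, hα, rfl⟩ := exists_eq_convexHull_image_of_isExposed hF hne
  rw [vectorSpan_convexHull] at hrank
  by_cases hker : vectorSpan ℝ (v '' {j | n (v j) = α}) = ℓ.ker
  · exact .of_forall fun c hℓc hc => ⟨_, isFaceLift_of_vectorSpan_eq_ker hℓ hv hle hα hker hℓc hc⟩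
  · have htop : vectorSpan ℝ (v '' {j | n (v j) = α}) ≠ ⊤ := fun h =>
      hrank.ne (by rw [h, finrank_top])
    obtain ⟨n', hn', α', hle', hJ⟩ := exists_notMem_span_singleton_setOf_eq hℓ hle hα htop hker
    obtain ⟨i, hi⟩ := hα
    rw [← hJ]
    exact eventually_exists_isFaceLift_of_notMem_span hℓ hn' hv hle' ⟨i, hJ.ge hi⟩

end NearestPoint

/-! ### Faces of the perturbed polytope -/

section PerturbedPolytope

variable {E : Type*} [NormedAddCommGroup E] [NormedSpace ℝ E] {ι : Type*}

theorem extremePoints_convexHull_range [Finite ι] {c : ι → E} (hc : ConvexIndependent ℝ c) :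
    (convexHull ℝ (range c)).extremePoints ℝ = range c := by
  refine extremePoints_convexHull_subset.antisymm (range_subset_iff.2 fun j => ?_)
  obtain ⟨T, hT⟩ := subset_range_iff_exists_image_eq.1
    (extremePoints_convexHull_subset (𝕜 := ℝ) (A := range c))
  rw [← hT]
  refine mem_image_of_mem c (hc T j ?_)
  rw [hT, convexHull_extremePoints_of_finite (finite_range c)]
  exact subset_convexHull ℝ _ (mem_range_self j)

theorem ncard_setOf_isExposed_le_of_isFaceLift [Finite ι] {v c : ι → E}
    (hc : ConvexIndependent ℝ c) {k : ℕ}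
    (hlift : ∀ F, IsExposed ℝ (convexHull ℝ (range v)) F → F.Nonempty →
      finrank ℝ (vectorSpan ℝ F) = k → ∃ S, IsFaceLift v c F S) :
    {F | IsExposed ℝ (convexHull ℝ (range v)) F ∧ F.Nonempty ∧
        finrank ℝ (vectorSpan ℝ F) = k}.ncard ≤
      {F | IsExposed ℝ (convexHull ℝ (range c)) F ∧ F.Nonempty ∧
        finrank ℝ (vectorSpan ℝ F) = k}.ncard := by
  choose! S hS using hlift
  refine ncard_le_ncard_of_injOn (fun F => convexHull ℝ (c '' S F)) ?_ ?_
    ((finite_setOf_isExposed_convexHull (finite_range c)).subset fun _ hF => hF.1)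
  · rintro F ⟨hF, hne, hk⟩
    have hlift := hS F hF hne hk
    refine ⟨hlift.isExposed, ?_, by rw [vectorSpan_convexHull, hlift.finrank_eq, hk]⟩
    rw [convexHull_nonempty_iff, image_nonempty, ← image_nonempty (f := v),
      ← affineSpan_nonempty ℝ, hlift.affineSpan_eq]
    exact (affineSpan_nonempty ℝ).2 hne
  · rintro F ⟨hF, hne, hk⟩ F' ⟨hF', hne', hk'⟩ heq
    have heq : convexHull ℝ (c '' S F) = convexHull ℝ (c '' S F') := heq
    have hSS : S F = S F' := by
      ext j
      rw [← hc.mem_convexHull_iff, heq, hc.mem_convexHull_iff]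
    rw [← inter_affineSpan_eq_of_isExposed hF, ← inter_affineSpan_eq_of_isExposed hF',
      ← (hS F hF hne hk).affineSpan_eq, hSS, (hS F' hF' hne' hk').affineSpan_eq]

theorem toExposed_smul_eq_or {ℓ : StrongDual ℝ E} {A : Set E} {a b : ℝ}
    (ha : IsLeast (ℓ '' A) a) (hb : IsGreatest (ℓ '' A) b) (s : ℝ) :
    (s • ℓ).toExposed A = A ∨ (s • ℓ).toExposed A = A ∩ {x | ℓ x = a} ∨
      (s • ℓ).toExposed A = A ∩ {x | ℓ x = b} := by
  have hmem (x : E) : x ∈ (s • ℓ).toExposed A ↔ x ∈ A ∧ ∀ r ∈ ℓ '' A, s * r ≤ s * ℓ x := by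
    rw [forall_mem_image]; rfl
  rcases lt_trichotomy s 0 with hs | rfl | hs
  · refine .inr (.inl (ext fun x => (hmem x).trans (and_congr_right fun hx => ?_)))
    simp only [mul_le_mul_left_of_neg hs]
    exact ⟨fun h => (h a ha.1).antisymm (ha.2 ⟨x, hx, rfl⟩), fun h r hr => h.trans_le (ha.2 hr)⟩
  · exact .inl (ext fun x => (hmem x).trans (by simp))
  · refine .inr (.inr (ext fun x => (hmem x).trans (and_congr_right fun hx => ?_)))
    simp only [mul_le_mul_iff_right₀ hs]
    exact ⟨fun h => (hb.2 ⟨x, hx, rfl⟩).antisymm (h b hb.1),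
      fun h r hr => (hb.2 hr).trans_eq h.symm⟩

theorem InLayeredGeneralPositionOn.affineIndependent_extremePoints [FiniteDimensional ℝ E]
    [Finite ι] {ℓ : StrongDual ℝ E} (hℓ : ℓ ≠ 0) {c : ι → E}
    (hc : InLayeredGeneralPositionOn ℓ c univ) {a b : ℝ}
    (ha : IsLeast (ℓ '' convexHull ℝ (range c)) a)
    (hb : IsGreatest (ℓ '' convexHull ℝ (range c)) b) {F : Set E}
    (hF : IsExposed ℝ (convexHull ℝ (range c)) F) (hne : F.Nonempty)
    (hproper : F ≠ convexHull ℝ (range c))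
    (hFa : F ≠ convexHull ℝ (range c) ∩ {x | ℓ x = a})
    (hFb : F ≠ convexHull ℝ (range c) ∩ {x | ℓ x = b}) :
    AffineIndependent ℝ ((↑) : F.extremePoints ℝ → E) := by
  obtain ⟨l, α, hle, hα, rfl⟩ := exists_eq_convexHull_image_of_isExposed hF hne
  have hl : l ∉ ℝ ∙ ℓ := by
    intro hmem
    obtain ⟨s, rfl⟩ := Submodule.mem_span_singleton.1 hmem
    rw [← toExposed_convexHull_range hle hα] at hproper hFa hFb
    exact (toExposed_smul_eq_or ha hb s).elim hproper (·.elim hFa hFb)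
  have hind := (hc.affineIndependent_setOf_eq hℓ hl α).range
  rw [← image_eq_range] at hind
  exact hind.mono extremePoints_convexHull_subset

end PerturbedPolytope

theorem isLeast_image_convexHull {E : Type*} [AddCommGroup E] [Module ℝ E] {l : E →ₗ[ℝ] ℝ}
    {s : Set E} {a : ℝ} (h : IsLeast (l '' s) a) : IsLeast (l '' convexHull ℝ s) a := by
  rw [l.image_convexHull]
  exact ⟨subset_convexHull ℝ _ h.1, convexHull_min h.2 (convex_Ici a)⟩

theorem isGreatest_image_convexHull {E : Type*} [AddCommGroup E] [Module ℝ E] {l : E →ₗ[ℝ] ℝ}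
    {s : Set E} {a : ℝ} (h : IsGreatest (l '' s) a) : IsGreatest (l '' convexHull ℝ s) a := by
  rw [l.image_convexHull]
  exact ⟨subset_convexHull ℝ _ h.1, convexHull_min h.2 (convex_Iic a)⟩

theorem exists_inLayeredGeneralPositionOn_ncard_setOf_isExposed_le {E ι : Type*}
    [NormedAddCommGroup E] [InnerProductSpace ℝ E] [FiniteDimensional ℝ E] [Finite ι]
    {ℓ : StrongDual ℝ E} (hℓ : ℓ ≠ 0) {v : ι → E} (hv : ConvexIndependent ℝ v) :
    ∃ c : ι → E, ℓ ∘ c = ℓ ∘ v ∧ ConvexIndependent ℝ c ∧ InLayeredGeneralPositionOn ℓ c univ ∧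
      ∀ k < finrank ℝ E,
        {F | IsExposed ℝ (convexHull ℝ (range v)) F ∧ F.Nonempty ∧
            finrank ℝ (vectorSpan ℝ F) = k}.ncard ≤
          {F | IsExposed ℝ (convexHull ℝ (range c)) F ∧ F.Nonempty ∧
            finrank ℝ (vectorSpan ℝ F) = k}.ncard := by
  have hlift : ∀ᶠ c in 𝓝 v, ∀ F ∈ {F | IsExposed ℝ (convexHull ℝ (range v)) F}, F.Nonempty →
      finrank ℝ (vectorSpan ℝ F) < finrank ℝ E → ℓ ∘ c = ℓ ∘ v →
      InLayeredGeneralPositionOn ℓ c univ → ∃ S, IsFaceLift v c F S := by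
    refine (eventually_all_finite (finite_setOf_isExposed_convexHull (finite_range v))).2
      fun F hF => ?_
    simp only [eventually_imp_distrib_left]
    exact fun hne hrank => eventually_exists_isFaceLift hℓ hv.injective hF hne hrank
  have hgeneric := frequently_inLayeredGeneralPositionOn_univ hℓ v
  obtain ⟨c, ⟨hℓc, hgp⟩, hc, hcF⟩ :=
    (hgeneric.and_eventually ((eventually_convexIndependent hv).and hlift)).exists
  refine ⟨c, hℓc, hc, hgp, fun k hk => ncard_setOf_isExposed_le_of_isFaceLift hc ?_⟩
  exact fun F hF hne hFk => hcF F hF hne (hFk.trans_lt hk) hℓc hgp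

theorem exists_finite_layered_simplicial_perturbation {E : Type*} [NormedAddCommGroup E]
    [InnerProductSpace ℝ E] [FiniteDimensional ℝ E] {ℓ : StrongDual ℝ E} (hℓ : ℓ ≠ 0) {s : Set E}
    (hs : s.Finite) {a b : ℝ} (ha : IsLeast (ℓ '' s) a) (hb : IsGreatest (ℓ '' s) b) :
    ∃ s' : Set E, s'.Finite ∧ ℓ '' s' ⊆ ℓ '' s ∧
      ((convexHull ℝ s').extremePoints ℝ).ncard = ((convexHull ℝ s).extremePoints ℝ).ncard ∧
      (∀ F, IsExposed ℝ (convexHull ℝ s') F → F.Nonempty → F ≠ convexHull ℝ s' →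
        F ≠ convexHull ℝ s' ∩ {x | ℓ x = a} → F ≠ convexHull ℝ s' ∩ {x | ℓ x = b} →
        AffineIndependent ℝ ((↑) : F.extremePoints ℝ → E)) ∧
      ∀ k < finrank ℝ E,
        {F | IsExposed ℝ (convexHull ℝ s) F ∧ F.Nonempty ∧ finrank ℝ (vectorSpan ℝ F) = k}.ncard ≤
          {F | IsExposed ℝ (convexHull ℝ s') F ∧ F.Nonempty ∧
            finrank ℝ (vectorSpan ℝ F) = k}.ncard := by
  set V := (convexHull ℝ s).extremePoints ℝ
  have hVs : V ⊆ s := extremePoints_convexHull_subset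
  have : Finite V := (hs.subset hVs).to_subtype
  have hV : convexHull ℝ (range ((↑) : V → E)) = convexHull ℝ s := by
    rw [Subtype.range_coe, convexHull_extremePoints_of_finite hs]
  obtain ⟨c, hℓc, hc, hgp, hcount⟩ := exists_inLayeredGeneralPositionOn_ncard_setOf_isExposed_le hℓ
    (convex_convexHull ℝ s).convexIndependent_extremePoints
  rw [hV] at hcount
  have hheight : ℓ '' range c = ℓ '' V := by
    rw [← range_comp, hℓc, range_comp, Subtype.range_coe]
  have himage : ℓ '' convexHull ℝ (range c) = ℓ '' convexHull ℝ s := by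
    have h (A : Set E) : ℓ '' convexHull ℝ A = convexHull ℝ (ℓ '' A) :=
      ℓ.toLinearMap.image_convexHull A
    rw [h, hheight, ← h, convexHull_extremePoints_of_finite hs]
  refine ⟨range c, finite_range c, hheight.trans_subset (image_mono hVs), ?_, ?_, hcount⟩
  · rw [extremePoints_convexHull_range hc, ncard_range_of_injective hc.injective,
      Nat.card_coe_set_eq]
  · intro F
    exact hgp.affineIndependent_extremePoints hℓ (himage ▸ isLeast_image_convexHull ha)
      (himage ▸ isGreatest_image_convexHull hb)

theorem nonempty_of_adim_ne_zero {N : ℕ} {F : Set (EuclideanSpace ℝ (Fin N))} (h : adim F ≠ 0) :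
    F.Nonempty := by
  contrapose! h
  rw [h, adim, vectorSpan_empty, finrank_bot]

theorem stmt2_general {N : ℕ} {κ : Type*} [Finite κ] {u : EuclideanSpace ℝ (Fin N)} (hu : u ≠ 0)
    {t : κ → ℝ} {P : κ → Set (EuclideanSpace ℝ (Fin N))} (hfin : ∀ i, (P i).Finite)
    (hsub : ∀ i, P i ⊆ {x | ⟪x, u⟫ = t i}) {a b : κ} (ha : ∀ i, t a ≤ t i) (hb : ∀ i, t i ≤ t b)
    (hPa : (P a).Nonempty) (hPb : (P b).Nonempty) :
    ∃ P' : κ → Set (EuclideanSpace ℝ (Fin N)),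
      (∀ i, (P' i).Finite) ∧
      (∀ i, P' i ⊆ {x | ⟪x, u⟫ = t i}) ∧
      ((convexHull ℝ (⋃ i, P' i)).extremePoints ℝ).ncard
        = ((convexHull ℝ (⋃ i, P i)).extremePoints ℝ).ncard ∧
      (∀ F : Set (EuclideanSpace ℝ (Fin N)),
        IsExposed ℝ (convexHull ℝ (⋃ i, P' i)) F → F.Nonempty →
        F ≠ convexHull ℝ (⋃ i, P' i) →
        F ≠ convexHull ℝ (⋃ i, P' i) ∩ {x | ⟪x, u⟫ = t a} →
        F ≠ convexHull ℝ (⋃ i, P' i) ∩ {x | ⟪x, u⟫ = t b} →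
        IsSimplexSet F) ∧
      ∀ k < N, fCount (convexHull ℝ (⋃ i, P i)) k ≤ fCount (convexHull ℝ (⋃ i, P' i)) k := by
  let ℓ : StrongDual ℝ (EuclideanSpace ℝ (Fin N)) := InnerProductSpace.toDual ℝ _ u
  have hℓ (x : EuclideanSpace ℝ (Fin N)) : ℓ x = ⟪x, u⟫ := real_inner_comm x u
  have himage : ℓ '' ⋃ i, P i ⊆ range t := by
    rw [image_subset_iff, iUnion_subset_iff]
    exact fun i x hx => ⟨i, ((hℓ x).trans (hsub i hx)).symm⟩
  have hmem {i : κ} (hi : (P i).Nonempty) : t i ∈ ℓ '' ⋃ i, P i := by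
    obtain ⟨x, hx⟩ := hi
    exact ⟨x, mem_iUnion_of_mem i hx, (hℓ x).trans (hsub i hx)⟩
  obtain ⟨s, hs, hsℓ, hncard, hsimplex, hcount⟩ :=
    exists_finite_layered_simplicial_perturbation (ℓ := ℓ) (by simpa [ℓ] using hu)
      (finite_iUnion hfin) ⟨hmem hPa, lowerBounds_mono_set himage (forall_mem_range.2 ha)⟩
      ⟨hmem hPb, upperBounds_mono_set himage (forall_mem_range.2 hb)⟩
  have hs_layers : ⋃ i, s ∩ {x | ⟪x, u⟫ = t i} = s := by
    rw [← inter_iUnion, inter_eq_left]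
    intro x hx
    obtain ⟨i, hi⟩ := himage (hsℓ (mem_image_of_mem ℓ hx))
    exact mem_iUnion_of_mem i (hi.trans (hℓ x)).symm
  refine ⟨fun i => s ∩ {x | ⟪x, u⟫ = t i}, fun i => hs.inter_of_left _,
    fun i => inter_subset_right, ?_⟩
  simp only [hℓ, finrank_euclideanSpace_fin] at hsimplex hcount
  rw [hs_layers]
  exact ⟨hncard, hsimplex, hcount⟩

theorem stmt2 (d m : ℕ) (hd : 2 ≤ d) (hm : 2 ≤ m)
    (u : EuclideanSpace ℝ (Fin (d + 1))) (hu : ‖u‖ = 1)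
    (t : Fin m → ℝ) (ht : StrictMono t)
    (P : Fin m → Set (EuclideanSpace ℝ (Fin (d + 1))))
    (hfin : ∀ i, (P i).Finite)
    (hsub : ∀ i, P i ⊆ {x | ⟪x, u⟫ = t i})
    (hdim : ∀ i, adim (convexHull ℝ (P i)) = d) :
    ∃ P' : Fin m → Set (EuclideanSpace ℝ (Fin (d + 1))),
      (∀ i, (P' i).Finite) ∧
      (∀ i, P' i ⊆ {x | ⟪x, u⟫ = t i}) ∧
      ((convexHull ℝ (⋃ i, P' i)).extremePoints ℝ).ncard
        = ((convexHull ℝ (⋃ i, P i)).extremePoints ℝ).ncard ∧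
      (∀ F : Set (EuclideanSpace ℝ (Fin (d + 1))),
        IsExposed ℝ (convexHull ℝ (⋃ i, P' i)) F → F.Nonempty →
        F ≠ convexHull ℝ (⋃ i, P' i) →
        F ≠ convexHull ℝ (⋃ i, P' i) ∩ {x | ⟪x, u⟫ = t ⟨0, by omega⟩} →
        F ≠ convexHull ℝ (⋃ i, P' i) ∩ {x | ⟪x, u⟫ = t ⟨m - 1, by omega⟩} →
        IsSimplexSet F) ∧
      (∀ k, 1 ≤ k → k ≤ d →
        fCount (convexHull ℝ (⋃ i, P i)) k ≤ fCount (convexHull ℝ (⋃ i, P' i)) k) := by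
  have hne (i : Fin m) : (P i).Nonempty := convexHull_nonempty_iff.1 <|
    nonempty_of_adim_ne_zero (by rw [hdim i]; omega)
  obtain ⟨P', hfin', hsub', hncard, hsimplex, hcount⟩ := stmt2_general
    (norm_ne_zero_iff.1 (hu.trans_ne one_ne_zero)) hfin hsub
    (fun i => ht.monotone (Nat.zero_le i)) (fun i => ht.monotone (Nat.le_sub_one_of_lt i.2))
    (hne ⟨0, by omega⟩) (hne ⟨m - 1, by omega⟩)
  exact ⟨P', hfin', hsub', hncard, hsimplex, fun k _ hk => hcount k (Nat.lt_succ_of_le hk)⟩
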